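/- Let A, B ⊆ [m] with 2 ≤ |A| + |B| ≤ 2m − 1, D = Δ_A + wΔ_B, and D^c = (F_4^m \ {0}) \ D. Then C_{D^c} has length 4^m − 2^{|A|+|B|}, exactly 4^m distinct codewords (dimension m over F_4), and minimum distance d = 3·2^{2m−2} − 3·2^{|A|+|B|−2}; the multiset {wt(c_{D^c}(x)) : x ∈ F_4^m} consists of: 0 once; d with multiplicity 4^{m−|A∪B|}(4^{|A∪B|} − 1 − 3(2^{|A\B|+|B\A|} − 1)); 3·2^{2m−2} − 2^{|A|+|B|−1} with multiplicity 3·4^{m−|A∪B|}(2^{|A\B|+|B\A|} − 1); and 3·2^{2m−2} with multiplicity 4^{m−|A∪B|} − 1. Moreover C_{D^c} is a Griesmer code: Σ_{i=0}^{m−1} ⌈d/4^i⌉ = 4^m − 2^{|A|+|B|}. -/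

import Mathlib

open Finset

/-- The support of a binary vector, as a finset of coordinates. -/
def supp {m : ℕ} (v : Fin m → ZMod 2) : Finset (Fin m) :=
  Finset.univ.filter (fun i => v i ≠ 0)

/-- The simplicial complex generated by `A`: all binary vectors with support contained in `A`. -/
def delta {m : ℕ} (A : Finset (Fin m)) : Finset (Fin m → ZMod 2) :=
  Finset.univ.filter (fun v => supp v ⊆ A)

variable {F : Type} [Field F] [Fintype F] [DecidableEq F]

/-- The embedding of `F_2 = {0,1}` into a field `F`. -/
def e2 (a : ZMod 2) : F := (a.val : F)

/-- The inner product `x·d = Σ x_i d_i` of two vectors over `F`. -/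
def dotF {m : ℕ} (x d : Fin m → F) : F := ∑ i, x i * d i

/-- The quaternary vector `d_1 + w·d_2` attached to a pair of binary vectors. -/
def dvec {m : ℕ} (w : F) (p : (Fin m → ZMod 2) × (Fin m → ZMod 2)) : Fin m → F :=
  fun i => e2 (p.1 i) + w * e2 (p.2 i)

/-- The Hamming weight of the codeword `c_D(x) = (x·d)_{d∈D}`. -/
def wtF {m : ℕ} (D : Finset (Fin m → F)) (x : Fin m → F) : ℕ :=
  (D.filter (fun d => dotF x d ≠ 0)).card

/-- The codeword `c_D(x) = (x·d)_{d∈D}` of the code with defining set `D`. -/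
def codeword {m : ℕ} (D : Finset (Fin m → F)) (x : Fin m → F) : {d // d ∈ D} → F :=
  fun d => dotF x d.1

/-! Let `V` be an additive subgroup of `K^m`. For fixed `x` the map `d ↦ x·d` sends `V` onto a
subgroup `x·V` of `K` with fibres of equal size, so `c_V(x)` has weight `|V| - |V| / |x·V|`, and
the weight of `c_{Vᶜ}(x)` is obtained by subtracting this from the weight for `V = K^m`. For
`|K| = 4` the group `x·V` has order `1`, `2` or `4`, which gives the three nonzero weights.

For `V = Δ_A + wΔ_B` the condition `x·V ≤ H` is coordinatewise: `x_i ∈ H` for `i ∈ A` and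
`w x_i ∈ H` for `i ∈ B`. When `H ∩ w⁻¹H = 0` the number of such `x` is a product over the
coordinates; the cases `H = 0` and `H = {0, u}` give the frequencies.

The Griesmer sum splits as `⌈d / 4^i⌉ = 3·4^(m-1-i) - ⌊3·2^(|A|+|B|-2) / 4^i⌋`.
-/

theorem map_val_eq_sum_replicate {α β γ : Type*} [DecidableEq β] {s : Finset α} {t : Finset β}
    {f : α → γ} {g : α → β} {h : β → γ} (hg : ∀ a ∈ s, g a ∈ t) (hf : ∀ a ∈ s, f a = h (g a)) :
    s.val.map f = ∑ b ∈ t, Multiset.replicate #{a ∈ s | g a = b} (h b) := by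
  calc s.val.map f = ∑ a ∈ s, {f a} := by
        rw [← Finset.sum_multiset_singleton s, ← Multiset.coe_mapAddMonoidHom, map_sum]
        simp
    _ = ∑ b ∈ t, ∑ a ∈ s with g a = b, {f a} := (Finset.sum_fiberwise_of_maps_to hg _).symm
    _ = ∑ b ∈ t, Multiset.replicate #{a ∈ s | g a = b} (h b) := by
        refine Finset.sum_congr rfl fun b _ ↦ ?_
        rw [Finset.sum_congr rfl (g := fun _ ↦ {h b}) (by grind), Finset.sum_const,
          Multiset.nsmul_singleton]

section AdditiveDefiningSet

variable {K : Type} [Field K] {m : ℕ}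

/-- The group `{x·d : d ∈ V}` of values taken by the coordinates of the codeword `c_V(x)`. -/
def valueGroup (V : AddSubgroup (Fin m → K)) (x : Fin m → K) : AddSubgroup K :=
  V.map (dotProductBilin K K x).toAddMonoidHom

theorem mem_valueGroup {V : AddSubgroup (Fin m → K)} {x : Fin m → K} {y : K} :
    y ∈ valueGroup V x ↔ ∃ d ∈ V, dotF x d = y :=
  Iff.rfl

theorem valueGroup_top {x : Fin m → K} (hx : x ≠ 0) : valueGroup ⊤ x = ⊤ := by
  obtain ⟨i, hi⟩ := Function.ne_iff.mp hx
  refine eq_top_iff.mpr fun y _ ↦ mem_valueGroup.mpr ⟨Pi.single i ((x i)⁻¹ * y), trivial, ?_⟩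
  exact (dotProduct_single _ _ _).trans (mul_inv_cancel_left₀ hi y)

theorem card_valueGroup_zero (V : AddSubgroup (Fin m → K)) : Nat.card (valueGroup V 0) = 1 := by
  rw [AddSubgroup.card_eq_one, AddSubgroup.eq_bot_iff_forall]
  rintro _ ⟨d, -, rfl⟩
  exact zero_dotProduct d

variable [DecidableEq K] {D : Finset (Fin m → K)}

theorem wtF_zero (D : Finset (Fin m → K)) : wtF D 0 = 0 := by
  simp [wtF, dotF]

theorem wtF_eq_card_sub_div {V : AddSubgroup (Fin m → K)} (hD : (D : Set (Fin m → K)) = V)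
    (x : Fin m → K) : wtF D x = #D - #D / Nat.card (valueGroup V x) := by
  set φ := (dotProductBilin K K x).toAddMonoidHom
  have card_V : Nat.card V = #D := by
    rw [← Set.ncard_coe_finset D, hD]; rfl
  have card_ker : Nat.card (φ.ker ⊓ V : AddSubgroup (Fin m → K)) = #{d ∈ D | dotF x d = 0} := by
    rw [← Set.ncard_coe_finset, Finset.coe_filter]
    simp only [← Finset.mem_coe, hD]
    exact congrArg Set.ncard (Set.inter_comm _ _)
  have card_mul : #{d ∈ D | dotF x d = 0} * Nat.card (valueGroup V x) = #D := by
    have := AddSubgroup.relIndex_mul_relIndex ⊥ (φ.ker ⊓ V) V bot_le inf_le_right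
    rwa [AddSubgroup.relIndex_bot_left, AddSubgroup.relIndex_bot_left,
      AddSubgroup.inf_relIndex_right, AddSubgroup.relIndex_ker, card_ker, card_V] at this
  have card_pos : 0 < Nat.card (valueGroup V x) := by
    have : 0 < #D := Finset.card_pos.mpr ⟨0, by simp [← Finset.mem_coe, hD]⟩
    exact Nat.pos_of_mul_pos_left (card_mul ▸ this)
  have card_add : #{d ∈ D | dotF x d = 0} + wtF D x = #D :=
    Finset.card_filter_add_card_filter_not _
  rw [← Nat.div_eq_of_eq_mul_left card_pos card_mul.symm] at card_add
  omega

theorem codeword_injective (hD : ∀ x ≠ 0, wtF D x ≠ 0) : Function.Injective (codeword D) := by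
  intro x y hxy
  by_contra hne
  refine hD (x - y) (sub_ne_zero.mpr hne) (Finset.card_eq_zero.mpr ?_)
  refine Finset.filter_eq_empty_iff.mpr fun d hd ↦ not_not.mpr ?_
  exact (sub_dotProduct x y d).trans (sub_eq_zero.mpr (congrFun hxy ⟨d, hd⟩))

variable [Fintype K]

theorem card_erase_zero_sdiff (zero_mem : 0 ∈ D) :
    #(univ.erase 0 \ D) = Fintype.card K ^ m - #D := by
  rw [Finset.erase_sdiff_comm, Finset.erase_eq_of_notMem (by simpa using zero_mem),
    Finset.card_sdiff_of_subset (Finset.subset_univ _), Finset.card_univ, Fintype.card_fun,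
    Fintype.card_fin]

theorem wtF_erase_zero_sdiff (x : Fin m → K) :
    wtF (univ.erase 0 \ D) x = wtF univ x - wtF D x := by
  have filter_eq : (univ.erase 0 \ D).filter (fun d ↦ dotF x d ≠ 0)
      = univ.filter (fun d ↦ dotF x d ≠ 0) \ D.filter (fun d ↦ dotF x d ≠ 0) := by
    ext d
    have : dotF x d ≠ 0 → d ≠ 0 := by
      rintro h rfl; exact h (dotProduct_zero x)
    simp only [ne_eq, Finset.mem_filter, Finset.mem_sdiff, Finset.mem_erase, Finset.mem_univ,
      and_true, true_and]
    tauto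
  rw [wtF, filter_eq, Finset.card_sdiff_of_subset (Finset.filter_subset_filter _ D.subset_univ)]
  rfl

theorem wtF_compl {V : AddSubgroup (Fin m → K)} (hD : (D : Set (Fin m → K)) = V)
    {x : Fin m → K} (hx : x ≠ 0) :
    wtF (univ.erase 0 \ D) x = Fintype.card K ^ m - Fintype.card K ^ m / Fintype.card K
      - (#D - #D / Nat.card (valueGroup V x)) := by
  rw [wtF_erase_zero_sdiff, wtF_eq_card_sub_div hD, wtF_eq_card_sub_div (V := ⊤) (by simp),
    valueGroup_top hx]
  simp

end AdditiveDefiningSet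

section FourElements

theorem card_addSubgroup_mem_of_card_eq_four {G : Type*} [AddGroup G] [Fintype G]
    (hG : Fintype.card G = 4) (H : AddSubgroup G) :
    Nat.card H ∈ ({1, 2, 4} : Finset ℕ) := by
  have := H.card_addSubgroup_dvd_card
  rw [Nat.card_eq_fintype_card (α := G), hG] at this
  have divisors_four : Nat.divisors 4 = {1, 2, 4} := by decide
  rw [← divisors_four]
  simpa using this

variable {K : Type} [Field K] [Fintype K] [DecidableEq K] {m n : ℕ}
  {D : Finset (Fin m → K)} {V : AddSubgroup (Fin m → K)}

theorem wtF_compl_of_card_eq_four (hK : Fintype.card K = 4) (hD : (D : Set (Fin m → K)) = V)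
    (hn : #D = 2 ^ n) {x : Fin m → K} (hx : x ≠ 0) :
    wtF (univ.erase 0 \ D) x
      = 3 * 2 ^ (2 * m - 2) - (2 ^ n - 2 ^ n / Nat.card (valueGroup V x)) := by
  obtain ⟨i, -⟩ := Function.ne_iff.mp hx
  obtain ⟨k, rfl⟩ := Nat.exists_eq_add_of_lt (Fin.pos i)
  have pow_eq : 4 ^ (0 + k + 1) = 4 * 2 ^ (2 * (0 + k + 1) - 2) := by
    rw [show 2 * (0 + k + 1) - 2 = 2 * k by omega, pow_mul]; ring
  rw [wtF_compl hD hx, hK, hn, pow_eq]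
  omega

theorem le_wtF_compl (hK : Fintype.card K = 4) (hD : (D : Set (Fin m → K)) = V)
    (hn : #D = 2 ^ (n + 2)) {x : Fin m → K} (hx : x ≠ 0) :
    3 * 2 ^ (2 * m - 2) - 3 * 2 ^ n ≤ wtF (univ.erase 0 \ D) x := by
  have card_mem := card_addSubgroup_mem_of_card_eq_four hK (valueGroup V x)
  rw [wtF_compl_of_card_eq_four hK hD hn hx]
  generalize Nat.card (valueGroup V x) = r at card_mem
  simp only [Finset.mem_insert, Finset.mem_singleton] at card_mem
  rcases card_mem with rfl | rfl | rfl <;> rw [pow_add] <;> omega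

theorem wtF_compl_ne_zero (hK : Fintype.card K = 4) (hD : (D : Set (Fin m → K)) = V)
    (hn : #D = 2 ^ (n + 2)) (hnm : n + 3 ≤ 2 * m) {x : Fin m → K} (hx : x ≠ 0) :
    wtF (univ.erase 0 \ D) x ≠ 0 := by
  have pow_lt : 2 ^ n < 2 ^ (2 * m - 2) := Nat.pow_lt_pow_right one_lt_two (by omega)
  have := le_wtF_compl hK hD hn hx
  omega

theorem wtF_compl_eq_of_card_valueGroup_eq_four (hK : Fintype.card K = 4)
    (hD : (D : Set (Fin m → K)) = V) (hn : #D = 2 ^ (n + 2)) {x : Fin m → K}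
    (hx : Nat.card (valueGroup V x) = 4) :
    wtF (univ.erase 0 \ D) x = 3 * 2 ^ (2 * m - 2) - 3 * 2 ^ n := by
  have hx0 : x ≠ 0 := by
    rintro rfl
    simp [card_valueGroup_zero] at hx
  rw [wtF_compl_of_card_eq_four hK hD hn hx0, hx, pow_add]
  omega

theorem map_wtF_compl (hK : Fintype.card K = 4) (hD : (D : Set (Fin m → K)) = V)
    (hn : #D = 2 ^ (n + 2)) :
    univ.val.map (wtF (univ.erase 0 \ D)) = Multiset.replicate 1 0
      + Multiset.replicate #{x | Nat.card (valueGroup V x) = 4}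
          (3 * 2 ^ (2 * m - 2) - 3 * 2 ^ n)
      + Multiset.replicate #{x | Nat.card (valueGroup V x) = 2}
          (3 * 2 ^ (2 * m - 2) - 2 ^ (n + 1))
      + Multiset.replicate (#{x | Nat.card (valueGroup V x) = 1} - 1)
          (3 * 2 ^ (2 * m - 2)) := by
  have pow_eq : 2 ^ (n + 2) = 4 * 2 ^ n ∧ 2 ^ (n + 1) = 2 * 2 ^ n := by
    constructor <;> ring
  have card_zero := card_valueGroup_zero V
  have map_nonzero := map_val_eq_sum_replicate (s := univ.erase 0)
    (h := fun r ↦ 3 * 2 ^ (2 * m - 2) - (2 ^ (n + 2) - 2 ^ (n + 2) / r))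
    (fun x _ ↦ card_addSubgroup_mem_of_card_eq_four hK (valueGroup V x))
    (fun x hx ↦ wtF_compl_of_card_eq_four hK hD hn (Finset.ne_of_mem_erase hx))
  have univ_val : (univ : Finset (Fin m → K)).val = 0 ::ₘ (univ.erase 0).val :=
    (Multiset.cons_erase (Finset.mem_univ 0)).symm
  have weight_one : 2 ^ (n + 2) - 2 ^ (n + 2) / 1 = 0 := by simp
  have weight_two : 2 ^ (n + 2) - 2 ^ (n + 2) / 2 = 2 ^ (n + 1) := by omega
  have weight_four : 2 ^ (n + 2) - 2 ^ (n + 2) / 4 = 3 * 2 ^ n := by omega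
  rw [univ_val, Multiset.map_cons, map_nonzero, Finset.sum_insert (by simp),
    Finset.sum_insert (by simp), Finset.sum_singleton, wtF_zero, weight_one, weight_two,
    weight_four, tsub_zero, ← Multiset.singleton_add, Multiset.replicate_one]
  simp only [Finset.filter_erase]
  rw [Finset.card_erase_of_mem (by simp [card_zero]),
    Finset.erase_eq_of_notMem (by simp [card_zero]),
    Finset.erase_eq_of_notMem (by simp [card_zero])]
  abel

end FourElements

section CharTwo

variable {R : Type*} [Ring R] [CharP R 2] {u : R} {H : AddSubgroup R}

theorem mem_zmultiples_iff_of_charTwo {y : R} :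
    y ∈ AddSubgroup.zmultiples u ↔ y = 0 ∨ y = u := by
  constructor
  · rintro ⟨n, rfl⟩
    obtain ⟨k, rfl | rfl⟩ := Int.even_or_odd' n <;> simp [CharTwo.two_eq_zero]
  · rintro (rfl | rfl) <;> simp

theorem zmultiples_injective_of_charTwo :
    Function.Injective (AddSubgroup.zmultiples : R → AddSubgroup R) := by
  intro u v huv
  have hu := mem_zmultiples_iff_of_charTwo.mp (huv ▸ AddSubgroup.mem_zmultiples u)
  have hv := mem_zmultiples_iff_of_charTwo.mp (huv ▸ AddSubgroup.mem_zmultiples v)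
  grind

theorem le_zmultiples_iff_of_charTwo :
    H ≤ AddSubgroup.zmultiples u ↔ H = ⊥ ∨ H = AddSubgroup.zmultiples u := by
  refine ⟨fun hH ↦ ?_, by rintro (rfl | rfl) <;> simp⟩
  by_cases hu : u ∈ H
  · exact .inr (le_antisymm hH (AddSubgroup.zmultiples_le_of_mem hu))
  · refine .inl ((AddSubgroup.eq_bot_iff_forall H).mpr fun y hy ↦ ?_)
    exact (mem_zmultiples_iff_of_charTwo.mp (hH hy)).resolve_right (by rintro rfl; exact hu hy)

theorem card_zmultiples_of_charTwo (hu : u ≠ 0) : Nat.card (AddSubgroup.zmultiples u) = 2 := by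
  rw [Nat.card_zmultiples]
  exact addOrderOf_eq_prime (CharTwo.two_nsmul u) hu

theorem card_eq_two_iff_exists_eq_zmultiples :
    Nat.card H = 2 ↔ ∃ u ≠ 0, H = AddSubgroup.zmultiples u := by
  refine ⟨fun hH ↦ ?_, by rintro ⟨u, hu, rfl⟩; exact card_zmultiples_of_charTwo hu⟩
  obtain ⟨⟨u, huH⟩, hu, unique⟩ := (Nat.card_eq_two_iff' (0 : H)).mp hH
  refine ⟨u, by simpa using hu, le_antisymm (fun y hy ↦ ?_) (by simpa using huH)⟩
  rw [mem_zmultiples_iff_of_charTwo, or_iff_not_imp_left]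
  exact fun hy0 ↦ congrArg Subtype.val (unique ⟨y, hy⟩ (by simpa using hy0))

open Classical in
theorem card_filter_card_addSubgroup_eq_two [Fintype R] {α : Type*} [Fintype α]
    (G : α → AddSubgroup R) :
    #{x | Nat.card (G x) = 2}
      = ∑ u ∈ univ.erase 0, (#{x | G x ≤ AddSubgroup.zmultiples u} - #{x | G x = ⊥}) := by
  have eq_biUnion : ({x | Nat.card (G x) = 2} : Finset α)
      = (univ.erase 0).biUnion fun u ↦ {x | G x = AddSubgroup.zmultiples u} := by
    ext x; simp [card_eq_two_iff_exists_eq_zmultiples, -Nat.card_eq_fintype_card]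
  rw [eq_biUnion, Finset.card_biUnion]
  · refine Finset.sum_congr rfl fun u hu ↦ ?_
    have hu_ne : AddSubgroup.zmultiples u ≠ ⊥ := by simpa using hu
    rw [← Finset.card_sdiff_of_subset (Finset.monotone_filter_right _ (by simp +contextual))]
    congr 1
    ext x
    simp only [Finset.mem_filter, Finset.mem_univ, true_and, le_zmultiples_iff_of_charTwo,
      Finset.mem_sdiff]
    grind
  · intro u _ v _ huv
    refine Finset.disjoint_filter.mpr fun x _ hxu hxv ↦ huv ?_
    exact zmultiples_injective_of_charTwo (hxu.symm.trans hxv)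

end CharTwo

section SimplicialSum

variable {K : Type} [Field K] {m : ℕ} {A B : Finset (Fin m)} {w : K}

theorem mem_delta {v : Fin m → ZMod 2} : v ∈ delta A ↔ ∀ i ∉ A, v i = 0 := by
  simp [delta, supp, Finset.subset_iff, not_imp_comm]

theorem card_delta (A : Finset (Fin m)) : #(delta A) = 2 ^ #A := by
  have delta_eq : delta A = Fintype.piFinset fun i ↦ if i ∈ A then univ else {0} := by
    ext v
    rw [mem_delta, Fintype.mem_piFinset]
    exact forall_congr' fun i ↦ by split_ifs with h <;> simp [h]
  rw [delta_eq, Fintype.card_piFinset]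
  simp [apply_ite Finset.card, Finset.prod_ite_mem]

theorem e2_zero : (e2 0 : K) = 0 := by simp [e2]

theorem e2_one : (e2 1 : K) = 1 := by simp [e2, ZMod.val_one]

theorem eq_zero_or_eq_one (a : ZMod 2) : a = 0 ∨ a = 1 := by decide +revert

theorem e2_eq_cast (a : ZMod 2) : (e2 a : K) = a.cast :=
  ZMod.natCast_val a

/-- The simplicial complex `Δ_A`, as a subgroup of `F_2^m` with carrier `delta A`. It makes
`Δ_A + wΔ_B` the image of a subgroup of `F_2^m × F_2^m`. -/
def deltaAddSubgroup (A : Finset (Fin m)) : AddSubgroup (Fin m → ZMod 2) where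
  carrier := delta A
  zero_mem' := by simp [mem_delta]
  add_mem' := by simp +contextual [mem_delta]
  neg_mem' := by simp [mem_delta]

theorem forall_mem_delta_dotF_mem_iff {H : AddSubgroup K} {y : Fin m → K} :
    (∀ v ∈ delta A, dotF y (e2 ∘ v) ∈ H) ↔ ∀ i ∈ A, y i ∈ H := by
  constructor
  · intro h i hi
    have single_mem : Pi.single i 1 ∈ delta A := by
      refine mem_delta.mpr fun j hj ↦ Pi.single_eq_of_ne ?_ 1
      rintro rfl; exact hj hi
    have dot_single : dotF y (e2 ∘ Pi.single i 1) = y i := by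
      simp [dotF, Pi.single_apply, apply_ite e2, e2_zero, e2_one]
    exact dot_single ▸ h _ single_mem
  · intro h v hv
    refine H.sum_mem fun i _ ↦ ?_
    obtain hi | hi := eq_zero_or_eq_one (v i)
    · simp [hi, e2_zero]
    · have : i ∈ A := by
        by_contra hiA; simp [mem_delta.mp hv i hiA] at hi
      simpa [hi, e2_one] using h i this

theorem dotF_dvec (x : Fin m → K) (p : (Fin m → ZMod 2) × (Fin m → ZMod 2)) :
    dotF x (dvec w p) = dotF x (e2 ∘ p.1) + dotF (w • x) (e2 ∘ p.2) := by
  simp only [dotF, dvec, ← Finset.sum_add_distrib, Function.comp_apply, Pi.smul_apply, smul_eq_mul]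
  exact Finset.sum_congr rfl fun i _ ↦ by ring

theorem card_filter_coord_mem [Fintype K] {H : AddSubgroup K} [DecidablePred (· ∈ H)]
    (hw0 : w ≠ 0) (hH : ∀ y ∈ H, w * y ∈ H → y = 0) (a b : Prop) [Decidable a] [Decidable b] :
    #{y : K | (a → y ∈ H) ∧ (b → w * y ∈ H)}
      = (if a ∨ b then 1 else Fintype.card K) * (if a ↔ b then 1 else Nat.card H) := by
  have card_H : #{y | y ∈ H} = Nat.card H := (Nat.subtype_card _ (by simp)).symm
  have card_comap : #{y | w * y ∈ H} = Nat.card H := by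
    rw [← card_H]
    exact Finset.card_equiv (Equiv.mulLeft₀ w hw0) (by simp)
  have card_both : #{y | y ∈ H ∧ w * y ∈ H} = 1 := by
    have zero_mem := H.zero_mem
    refine Finset.card_eq_one.mpr ⟨0, Finset.ext fun y ↦ ?_⟩
    simp only [Finset.mem_filter, Finset.mem_univ, true_and, Finset.mem_singleton]
    grind
  by_cases a <;> by_cases b <;> simp [*]

variable [CharP K 2]

/-- The map `(d₁, d₂) ↦ d₁ + w·d₂` from `F_2^m × F_2^m`, as a group homomorphism. -/
def dvecHom (w : K) : (Fin m → ZMod 2) × (Fin m → ZMod 2) →+ (Fin m → K) :=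
  AddMonoidHom.mk' (dvec w) fun p q ↦ by
    ext i
    simp only [dvec, Prod.fst_add, Prod.snd_add, Pi.add_apply, e2_eq_cast, dvd_refl,
      ZMod.cast_add]
    ring

theorem dvec_injective (hw0 : w ≠ 0) (hw1 : w ≠ 1) :
    Function.Injective (dvec (m := m) w) := by
  refine (injective_iff_map_eq_zero (dvecHom w)).mpr fun p hp ↦ ?_
  have independent (a b : ZMod 2) (h : (e2 a + w * e2 b : K) = 0) : a = 0 ∧ b = 0 := by
    rcases eq_zero_or_eq_one a with rfl | rfl <;> rcases eq_zero_or_eq_one b with rfl | rfl <;>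
      simp_all [e2_zero, e2_one, CharTwo.add_eq_zero, hw1.symm]
  have coord_eq_zero i := independent (p.1 i) (p.2 i) (congrFun hp i)
  exact Prod.ext (funext fun i ↦ (coord_eq_zero i).1) (funext fun i ↦ (coord_eq_zero i).2)

/-- The defining set `Δ_A + wΔ_B`, as an additive subgroup of `K^m`. It is an image under
`dvecHom w`, so its carrier is the image of `delta A ×ˢ delta B` under `dvec w`. -/
def simplicialSum (w : K) (A B : Finset (Fin m)) : AddSubgroup (Fin m → K) :=
  ((deltaAddSubgroup A).prod (deltaAddSubgroup B)).map (dvecHom w)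

theorem coe_simplicialSum [DecidableEq K] (w : K) (A B : Finset (Fin m)) :
    ((delta A ×ˢ delta B).image (dvec w) : Set (Fin m → K)) = simplicialSum w A B := by
  rw [Finset.coe_image, Finset.coe_product]
  rfl

theorem card_image_dvec [DecidableEq K] (hw0 : w ≠ 0) (hw1 : w ≠ 1) (A B : Finset (Fin m)) :
    #((delta A ×ˢ delta B).image (dvec w)) = 2 ^ (#A + #B) := by
  rw [Finset.card_image_of_injective _ (dvec_injective hw0 hw1), Finset.card_product, card_delta,
    card_delta, pow_add]

theorem valueGroup_simplicialSum_le_iff {H : AddSubgroup K} {x : Fin m → K} :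
    valueGroup (simplicialSum w A B) x ≤ H
      ↔ ∀ i, (i ∈ A → x i ∈ H) ∧ (i ∈ B → w * x i ∈ H) := by
  calc valueGroup (simplicialSum w A B) x ≤ H
      ↔ ∀ v₁ ∈ delta A, ∀ v₂ ∈ delta B, dotF x (dvec w (v₁, v₂)) ∈ H := by
        rw [valueGroup, simplicialSum, AddSubgroup.map_map, AddSubgroup.map_le_iff_le_comap]
        exact ⟨fun h v₁ hv₁ v₂ hv₂ ↦ h (x := (v₁, v₂)) ⟨hv₁, hv₂⟩, fun h v hv ↦ h _ hv.1 _ hv.2⟩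
    _ ↔ (∀ v ∈ delta A, dotF x (e2 ∘ v) ∈ H) ∧ ∀ v ∈ delta B, dotF (w • x) (e2 ∘ v) ∈ H := by
        simp only [dotF_dvec]
        refine ⟨fun h ↦ ⟨fun v hv ↦ ?_, fun v hv ↦ ?_⟩, fun h v₁ hv₁ v₂ hv₂ ↦ ?_⟩
        · simpa [dotF, e2_zero] using h v hv 0 (by simp [mem_delta])
        · simpa [dotF, e2_zero] using h 0 (by simp [mem_delta]) v hv
        · exact H.add_mem (h.1 v₁ hv₁) (h.2 v₂ hv₂)
    _ ↔ ∀ i, (i ∈ A → x i ∈ H) ∧ (i ∈ B → w * x i ∈ H) := by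
        simp only [forall_mem_delta_dotF_mem_iff, forall_and]
        rfl

variable [Fintype K]

open Classical in
theorem card_filter_valueGroup_le {H : AddSubgroup K} (hw0 : w ≠ 0)
    (hH : ∀ y ∈ H, w * y ∈ H → y = 0) :
    #{x | valueGroup (simplicialSum w A B) x ≤ H}
      = Fintype.card K ^ (m - #(A ∪ B)) * Nat.card H ^ (#(A \ B) + #(B \ A)) := by
  have filter_eq : ({x | valueGroup (simplicialSum w A B) x ≤ H} : Finset (Fin m → K))
      = Fintype.piFinset fun i ↦ {y | (i ∈ A → y ∈ H) ∧ (i ∈ B → w * y ∈ H)} := by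
    ext x; simp [valueGroup_simplicialSum_le_iff]
  have filter_union : univ.filter (fun i ↦ ¬(i ∈ A ∨ i ∈ B)) = (A ∪ B)ᶜ := by ext; simp
  have filter_sdiff : univ.filter (fun i ↦ ¬(i ∈ A ↔ i ∈ B)) = A \ B ∪ B \ A := by ext; grind
  have disjoint : Disjoint (A \ B) (B \ A) := disjoint_sdiff_sdiff
  rw [filter_eq, Fintype.card_piFinset]
  simp only [card_filter_coord_mem hw0 hH, Finset.prod_mul_distrib, Finset.prod_ite,
    Finset.prod_const, one_pow, one_mul, filter_union, filter_sdiff, Finset.card_compl,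
    Fintype.card_fin, Finset.card_union_of_disjoint disjoint]

theorem card_filter_valueGroup_card_eq_one (hw0 : w ≠ 0) :
    #{x | Nat.card (valueGroup (simplicialSum w A B) x) = 1}
      = Fintype.card K ^ (m - #(A ∪ B)) := by
  classical
  have card_le_bot := card_filter_valueGroup_le (A := A) (B := B) (H := ⊥) hw0 (by simp)
  rw [AddSubgroup.card_bot, one_pow, mul_one] at card_le_bot
  simpa only [le_bot_iff, ← AddSubgroup.card_eq_one] using card_le_bot

theorem card_filter_valueGroup_card_eq_two (hw0 : w ≠ 0) (hw1 : w ≠ 1) :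
    #{x | Nat.card (valueGroup (simplicialSum w A B) x) = 2}
      = Fintype.card K ^ (m - #(A ∪ B)) * (Fintype.card K - 1)
        * (2 ^ (#(A \ B) + #(B \ A)) - 1) := by
  classical
  have inter_eq_zero (u y : K) (hy : y ∈ AddSubgroup.zmultiples u)
      (hwy : w * y ∈ AddSubgroup.zmultiples u) : y = 0 := by
    rw [mem_zmultiples_iff_of_charTwo] at hy hwy
    rcases hy with rfl | rfl
    · rfl
    · by_contra hy
      exact hw1 ((mul_eq_right₀ hy).mp (hwy.resolve_left (mul_ne_zero hw0 hy)))
  have card_bot := card_filter_valueGroup_card_eq_one (A := A) (B := B) hw0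
  simp only [AddSubgroup.card_eq_one] at card_bot
  have card_le (u : K) (hu : u ∈ univ.erase 0) :
      #{x | valueGroup (simplicialSum w A B) x ≤ AddSubgroup.zmultiples u}
          - #{x | valueGroup (simplicialSum w A B) x = ⊥}
        = Fintype.card K ^ (m - #(A ∪ B)) * (2 ^ (#(A \ B) + #(B \ A)) - 1) := by
    rw [card_filter_valueGroup_le hw0 (inter_eq_zero u),
      card_zmultiples_of_charTwo (Finset.ne_of_mem_erase hu), card_bot, Nat.mul_sub_one]
  rw [card_filter_card_addSubgroup_eq_two, Finset.sum_congr rfl card_le, Finset.sum_const,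
    Finset.card_erase_of_mem (Finset.mem_univ 0), Finset.card_univ, smul_eq_mul]
  ring

theorem card_filter_valueGroup_card_eq_four (hK : Fintype.card K = 4) (hw0 : w ≠ 0)
    (hw1 : w ≠ 1) :
    #{x | Nat.card (valueGroup (simplicialSum w A B) x) = 4}
      = 4 ^ (m - #(A ∪ B)) * (4 ^ #(A ∪ B) - 1 - 3 * (2 ^ (#(A \ B) + #(B \ A)) - 1)) := by
  have card_total := Finset.card_eq_sum_card_fiberwise (s := (univ : Finset (Fin m → K)))
    (fun x _ ↦ card_addSubgroup_mem_of_card_eq_four hK (valueGroup (simplicialSum w A B) x))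
  have card_one := card_filter_valueGroup_card_eq_one (A := A) (B := B) hw0
  have card_two := card_filter_valueGroup_card_eq_two (A := A) (B := B) hw0 hw1
  have pow_eq : 4 ^ m = 4 ^ (m - #(A ∪ B)) * 4 ^ #(A ∪ B) := by
    rw [← pow_add, Nat.sub_add_cancel (by simpa using Finset.card_le_univ (A ∪ B))]
  rw [hK] at card_one
  rw [hK, show 4 - 1 = 3 from rfl] at card_two
  rw [Finset.sum_insert (by simp), Finset.sum_insert (by simp), Finset.sum_singleton, card_one,
    card_two, Finset.card_univ, Fintype.card_fun, Fintype.card_fin, hK, pow_eq] at card_total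
  rw [Nat.mul_sub, Nat.mul_sub_one, ← mul_assoc, card_total]
  omega

theorem one_add_three_mul_lt_four_pow_card_union (h : 2 ≤ #A + #B) :
    1 + 3 * (2 ^ (#(A \ B) + #(B \ A)) - 1) < 4 ^ #(A ∪ B) := by
  have card_eq : 2 * #(A ∪ B) = #(A \ B) + #(B \ A) + (#A + #B) := by
    have := Finset.card_union_add_card_inter A B
    have := Finset.card_sdiff_add_card_inter A B
    have := Finset.card_sdiff_add_card_inter B A
    have := Finset.inter_comm A B
    grind
  calc 1 + 3 * (2 ^ (#(A \ B) + #(B \ A)) - 1)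
      < 2 ^ (#(A \ B) + #(B \ A)) * 2 ^ 2 := by
        have := Nat.one_le_two_pow (n := #(A \ B) + #(B \ A))
        omega
    _ ≤ 2 ^ (#(A \ B) + #(B \ A)) * 2 ^ (#A + #B) := by gcongr; simp
    _ = 4 ^ #(A ∪ B) := by rw [← pow_add, ← card_eq, pow_mul]; rfl

theorem exists_card_valueGroup_eq_four (hK : Fintype.card K = 4) (hw0 : w ≠ 0) (hw1 : w ≠ 1)
    (h : 2 ≤ #A + #B) : ∃ x, Nat.card (valueGroup (simplicialSum w A B) x) = 4 := by
  have card_pos : 0 < #{x | Nat.card (valueGroup (simplicialSum w A B) x) = 4} := by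
    have := one_add_three_mul_lt_four_pow_card_union h
    rw [card_filter_valueGroup_card_eq_four hK hw0 hw1]
    exact Nat.mul_pos (by positivity) (by omega)
  simpa [Finset.Nonempty] using Finset.card_pos.mp card_pos

end SimplicialSum

section GriesmerSum

theorem sum_range_div_four_pow {m k : ℕ} (h : k + 3 ≤ 2 * m) :
    ∑ i ∈ range m, 3 * 2 ^ k / 4 ^ i + 1 = 2 ^ (k + 2) := by
  induction k using Nat.twoStepInduction generalizing m with
  | zero =>
    obtain ⟨l, rfl⟩ := Nat.exists_eq_add_of_le' (show 1 ≤ m by omega)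
    have div_eq_zero (i : ℕ) : 3 * 2 ^ 0 / 4 ^ (i + 1) = 0 :=
      Nat.div_eq_of_lt (lt_of_lt_of_le (by norm_num) (Nat.le_self_pow i.succ_ne_zero 4))
    simp only [Finset.sum_range_succ', div_eq_zero, Finset.sum_const_zero]
    rfl
  | one =>
    obtain ⟨l, rfl⟩ := Nat.exists_eq_add_of_le' (show 2 ≤ m by omega)
    have div_eq_zero (i : ℕ) : 3 * 2 ^ 1 / 4 ^ (i + 2) = 0 :=
      Nat.div_eq_of_lt (lt_of_lt_of_le (by norm_num) (Nat.pow_le_pow_right four_pos le_add_self))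
    simp only [Finset.sum_range_succ', div_eq_zero, Finset.sum_const_zero]
    rfl
  | more k ih _ =>
    obtain ⟨l, rfl⟩ := Nat.exists_eq_add_of_le' (show 1 ≤ m by omega)
    have div_eq (i : ℕ) : 3 * 2 ^ (k + 2) / 4 ^ (i + 1) = 3 * 2 ^ k / 4 ^ i := by
      rw [pow_succ 4, pow_add, ← mul_assoc]
      exact Nat.mul_div_mul_right _ _ four_pos
    have sum_eq := ih (m := l) (by omega)
    simp only [Finset.sum_range_succ', div_eq, pow_zero, Nat.div_one]
    rw [pow_add 2 (k + 2)]
    omega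

theorem ceil_sub_div_pow {q : ℕ} (hq : q ≠ 0) (b c : ℕ) {i n : ℕ} (hi : i ≤ n) :
    ⌈(c * q ^ n - b : ℚ) / q ^ i⌉ = (c * q ^ (n - i) : ℤ) - (b / q ^ i : ℕ) := by
  have split : (c * q ^ n - b : ℚ) / q ^ i = (c * q ^ (n - i) : ℤ) + -(b / (q ^ i : ℕ) : ℚ) := by
    have hq' : (q : ℚ) ≠ 0 := Nat.cast_ne_zero.mpr hq
    rw [sub_div, mul_div_assoc, div_eq_mul_inv (_ ^ n), ← pow_sub₀ _ hq' hi]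
    push_cast
    ring
  rw [split, Int.ceil_intCast_add, Int.ceil_neg, Rat.floor_natCast_div_natCast]
  push_cast
  ring

theorem sum_range_ceil_div_four_pow {m n : ℕ} (hn : n + 3 ≤ 2 * m) :
    ∑ i ∈ range m, ⌈(3 * 2 ^ (2 * m - 2) - 3 * 2 ^ n : ℚ) / 4 ^ i⌉
      = (4 ^ m - 2 ^ (n + 2) : ℤ) := by
  have ceil_eq (i) (hi : i ∈ range m) : ⌈(3 * 2 ^ (2 * m - 2) - 3 * 2 ^ n : ℚ) / 4 ^ i⌉
      = (3 * 4 ^ (m - 1 - i) : ℤ) - (3 * 2 ^ n / 4 ^ i : ℕ) := by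
    rw [show 2 * m - 2 = 2 * (m - 1) by omega, pow_mul]
    convert ceil_sub_div_pow four_ne_zero (3 * 2 ^ n) 3 (Nat.le_pred_of_lt (mem_range.mp hi))
    all_goals norm_num
  have geom : ∑ i ∈ range m, 3 * 4 ^ (m - 1 - i) + 1 = (4 ^ m : ℤ) := by
    rw [Finset.sum_range_reflect (fun i ↦ 3 * (4 : ℤ) ^ i), ← Finset.mul_sum, mul_comm]
    simpa using geom_sum_mul_add (3 : ℤ) m
  have floor_sum : ∑ i ∈ range m, ((3 * 2 ^ n / 4 ^ i : ℕ) : ℤ) + 1 = (2 ^ (n + 2) : ℤ) :=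
    mod_cast sum_range_div_four_pow hn
  rw [Finset.sum_congr rfl ceil_eq, Finset.sum_sub_distrib]
  linarith

end GriesmerSum

/-- Theorem 4.4: for `D = Δ_A + wΔ_B` with `2 ≤ |A|+|B| ≤ 2m−1`, the code `C_{D^c}` is a
`[4^m − 2^{|A|+|B|}, m, 3·2^{2m−2} − 3·2^{|A|+|B|−2}]` quaternary code with the stated
weight distribution, and it is a Griesmer code. -/
theorem quaternary_complement_code_Griesmer {m : ℕ} (hm : 1 ≤ m)
    (hF : Fintype.card F = 4) (w : F) (hw : w ^ 2 + w + 1 = 0)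
    (A B : Finset (Fin m)) (hAB : 2 ≤ A.card + B.card) (hAB' : A.card + B.card ≤ 2 * m - 1) :
    ((Finset.univ.erase (0 : Fin m → F)) \ ((delta A ×ˢ delta B).image (dvec w))).card
      = 4 ^ m - 2 ^ (A.card + B.card)
    ∧ (Finset.univ.image
        (fun x : Fin m → F => codeword
          ((Finset.univ.erase (0 : Fin m → F)) \ ((delta A ×ˢ delta B).image (dvec w))) x)).card
      = 4 ^ m
    ∧ ((∀ x : Fin m → F,
          wtF ((Finset.univ.erase (0 : Fin m → F)) \ ((delta A ×ˢ delta B).image (dvec w))) x = 0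
          ∨ 3 * 2 ^ (2 * m - 2) - 3 * 2 ^ (A.card + B.card - 2)
            ≤ wtF ((Finset.univ.erase (0 : Fin m → F)) \ ((delta A ×ˢ delta B).image (dvec w))) x)
       ∧ (∃ x : Fin m → F,
          wtF ((Finset.univ.erase (0 : Fin m → F)) \ ((delta A ×ˢ delta B).image (dvec w))) x
            = 3 * 2 ^ (2 * m - 2) - 3 * 2 ^ (A.card + B.card - 2)))
    ∧ (Finset.univ.val.map
        (fun x : Fin m → F =>
          wtF ((Finset.univ.erase (0 : Fin m → F)) \ ((delta A ×ˢ delta B).image (dvec w))) x))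
      = Multiset.replicate 1 0
        + Multiset.replicate (4 ^ (m - (A ∪ B).card)
            * (4 ^ (A ∪ B).card - 1 - 3 * (2 ^ ((A \ B).card + (B \ A).card) - 1)))
          (3 * 2 ^ (2 * m - 2) - 3 * 2 ^ (A.card + B.card - 2))
        + Multiset.replicate (4 ^ (m - (A ∪ B).card) * 3
            * (2 ^ ((A \ B).card + (B \ A).card) - 1))
          (3 * 2 ^ (2 * m - 2) - 2 ^ (A.card + B.card - 1))
        + Multiset.replicate (4 ^ (m - (A ∪ B).card) - 1) (3 * 2 ^ (2 * m - 2))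
    ∧ (∑ i ∈ Finset.range m,
        ⌈((3 * 2 ^ (2 * m - 2) - 3 * 2 ^ (A.card + B.card - 2) : ℚ)) / 4 ^ i⌉
        = (4 ^ m - 2 ^ (A.card + B.card) : ℤ)) := by
  have : CharP F 2 := charP_of_card_eq_prime_pow (p := 2) (f := 2) (by simpa using hF)
  have hw0 : w ≠ 0 := by rintro rfl; simp at hw
  have hw1 : w ≠ 1 := by rintro rfl; simp [CharTwo.add_self_eq_zero] at hw
  obtain ⟨n, hn⟩ := Nat.exists_eq_add_of_le' hAB
  have hnm : n + 3 ≤ 2 * m := by omega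
  have hD := coe_simplicialSum w A B
  have card_D := card_image_dvec hw0 hw1 A B
  simp only [hn, Nat.add_sub_cancel, Nat.add_succ_sub_one] at card_D ⊢
  refine ⟨?_, ?_, ⟨fun x ↦ ?_, ?_⟩, ?_, sum_range_ceil_div_four_pow hnm⟩
  · rw [card_erase_zero_sdiff (hD.ge (simplicialSum w A B).zero_mem), hF, card_D]
  · have injective := codeword_injective fun x ↦ wtF_compl_ne_zero hF hD card_D hnm (x := x)
    rw [Finset.card_image_of_injective _ injective, Finset.card_univ, Fintype.card_fun, hF,
      Fintype.card_fin]
  · obtain rfl | hx := eq_or_ne x 0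
    · exact .inl (wtF_zero _)
    · exact .inr (le_wtF_compl hF hD card_D hx)
  · obtain ⟨x, hx⟩ := exists_card_valueGroup_eq_four hF hw0 hw1 hAB
    exact ⟨x, wtF_compl_eq_of_card_valueGroup_eq_four hF hD card_D hx⟩
  · rw [map_wtF_compl hF hD card_D, card_filter_valueGroup_card_eq_one hw0,
      card_filter_valueGroup_card_eq_two hw0 hw1, card_filter_valueGroup_card_eq_four hF hw0 hw1,
      hF]
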